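/- A series-parallel graph G is minimally t-tough for some t with 1/2 < t < 1 if and only if G has toughness t and its series-parallel tree contains no jump-edges. -/

import Mathlib

open SimpleGraph

noncomputable def numComp {V : Type*} (G : SimpleGraph V) (S : Set V) : ℕ :=
  Nat.card (SimpleGraph.induce Sᶜ G).ConnectedComponent

def IsCutset {V : Type*} (G : SimpleGraph V) (S : Set V) : Prop := 1 < numComp G S

noncomputable def toughness {V : Type*} (G : SimpleGraph V) : ℝ :=
  sInf {r : ℝ | ∃ S : Set V, IsCutset G S ∧ r = (S.ncard : ℝ) / (numComp G S : ℝ)}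

def IsToughSet {V : Type*} (G : SimpleGraph V) (S : Set V) : Prop :=
  IsCutset G S ∧ (S.ncard : ℝ) = toughness G * (numComp G S : ℝ)

def MinTough {V : Type*} (G : SimpleGraph V) (t : ℝ) : Prop :=
  toughness G = t ∧ ∀ e ∈ G.edgeSet, toughness (G.deleteEdges {e}) < t

def IsCutVertex {V : Type*} (G : SimpleGraph V) (x : V) : Prop := IsCutset G {x}

inductive SPTree (V : Type*) where
  | edge (u v : V) : SPTree V
  | series (l r : SPTree V) : SPTree V
  | parallel (l r : SPTree V) : SPTree V

namespace SPTree

def src {V : Type*} : SPTree V → V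
  | edge u _ => u
  | series l _ => l.src
  | parallel l _ => l.src

def tgt {V : Type*} : SPTree V → V
  | edge _ v => v
  | series _ r => r.tgt
  | parallel l _ => l.tgt

def verts {V : Type*} : SPTree V → Set V
  | edge u v => {u, v}
  | series l r => l.verts ∪ r.verts
  | parallel l r => l.verts ∪ r.verts

def edges {V : Type*} : SPTree V → Set (Sym2 V)
  | edge u v => {s(u, v)}
  | series l r => l.edges ∪ r.edges
  | parallel l r => l.edges ∪ r.edges

def WF {V : Type*} : SPTree V → Prop
  | edge u v => u ≠ v
  | series l r => l.WF ∧ r.WF ∧ l.tgt = r.src ∧ l.verts ∩ r.verts = {l.tgt}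
  | parallel l r => l.WF ∧ r.WF ∧ l.src = r.src ∧ l.tgt = r.tgt ∧
      l.verts ∩ r.verts = {l.src, l.tgt} ∧ Disjoint l.edges r.edges

end SPTree

/-- `G` is the series-parallel graph given by the (well-formed, spanning) sp-tree `T`. -/
def RepresentsSP {V : Type*} (G : SimpleGraph V) (T : SPTree V) : Prop :=
  T.WF ∧ T.verts = Set.univ ∧ G = SimpleGraph.fromEdgeSet T.edges

def IsSPGraph {V : Type*} (G : SimpleGraph V) : Prop := ∃ T : SPTree V, RepresentsSP G T

namespace SPTree

/-- The children of the (flattened, canonical) parallel node at the root of `t`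
(or `[t]` if `t` is not a parallel node). -/
def parChildren {V : Type*} : SPTree V → List (SPTree V)
  | .parallel l r => parChildren l ++ parChildren r
  | t => [t]

/-- `pars true t` lists all (canonical, flattened) parallel nodes of the sp-tree `t`;
`pars false t` lists all of them except the root cluster when `t` itself is parallel. -/
def pars {V : Type*} : Bool → SPTree V → List (SPTree V)
  | _, .edge _ _ => []
  | _, .series l r => pars true l ++ pars true r
  | b, .parallel l r => (if b then [.parallel l r] else []) ++ pars false l ++ pars false r

def IsEdgeLeaf {V : Type*} : SPTree V → Prop
  | .edge _ _ => True
  | _ => False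

def IsParallelNode {V : Type*} : SPTree V → Prop
  | .parallel _ _ => True
  | _ => False

/-- A parallel node has an edge among its (canonical) children. -/
def HasEdgeChild {V : Type*} (t : SPTree V) : Prop :=
  ∃ c ∈ t.parChildren, c.IsEdgeLeaf

/-- The sp-tree `T` contains a jump-edge: an edge whose parent is a parallel node that is
either not the root, or is the root but has at least two series-node siblings of the edge
(equivalently at least three children, since parallel edges are excluded). -/
def HasJumpEdge {V : Type*} (T : SPTree V) : Prop :=
  (∃ P ∈ pars false T, P.HasEdgeChild) ∨
  (T.IsParallelNode ∧ T.HasEdgeChild ∧ 3 ≤ T.parChildren.length)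

end SPTree

/-!
A jump-edge `uv` is one whose deletion leaves `u` and `v` joined on both sides of a 2-separation
with boundary `{u, v}`. Then `{u, v}` is a cutset, so `τ(G) ≤ 1`, and a set `S` separating `u` from
`v` in `G - uv` meets both sides, so that the toughness bounds for the two traces of `S` add up
to the bound for `S` in `G - uv`: deleting `uv` does not lower the toughness. If there is no
jump-edge, every edge is a child of a series node or a leap-edge, and deleting it creates a cut
vertex, which forces the toughness down to `1/2`.
-/

section Components

variable {V : Type*} {G G' : SimpleGraph V} {S S' R : Set V} {x y z : V}

theorem reachable_induction {p : V → Prop} (hp : ∀ ⦃a b⦄, G.Adj a b → p a → p b)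
    (h : G.Reachable x y) (hx : p x) : p y := by
  rw [reachable_iff_reflTransGen] at h
  induction h with
  | refl => exact hx
  | tail _ hab ih => exact hp hab ih

/-- The vertices `x` and `y` lie in the same component of `G - S`. Stated for elements of `V`
rather than of the subtype `Sᶜ`, so that the removed set `S` can vary. -/
def ReachableAvoiding (G : SimpleGraph V) (S : Set V) (x y : V) : Prop :=
  ∃ (hx : x ∉ S) (hy : y ∉ S), (induce Sᶜ G).Reachable ⟨x, hx⟩ ⟨y, hy⟩

namespace ReachableAvoiding

theorem refl (hx : x ∉ S) : ReachableAvoiding G S x x := ⟨hx, hx, .refl _⟩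

theorem symm : ReachableAvoiding G S x y → ReachableAvoiding G S y x
  | ⟨hx, hy, h⟩ => ⟨hy, hx, h.symm⟩

theorem trans : ReachableAvoiding G S x y → ReachableAvoiding G S y z → ReachableAvoiding G S x z
  | ⟨hx, _, hxy⟩, ⟨_, hz, hyz⟩ => ⟨hx, hz, hxy.trans hyz⟩

theorem of_adj (h : G.Adj x y) (hx : x ∉ S) (hy : y ∉ S) : ReachableAvoiding G S x y :=
  ⟨hx, hy, Adj.reachable (G := induce Sᶜ G) h⟩

theorem induction {p : V → Prop} (h : ReachableAvoiding G S x y)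
    (hp : ∀ ⦃a b⦄, G.Adj a b → a ∉ S → b ∉ S → p a → p b) (hx : p x) : p y := by
  obtain ⟨hxS, hyS, h⟩ := h
  exact reachable_induction (p := fun a : (Sᶜ : Set V) => p a)
    (fun a b hab => hp hab a.2 b.2) h hx

theorem mono (hG : G ≤ G') (hS : S' ⊆ S) (h : ReachableAvoiding G S x y) :
    ReachableAvoiding G' S' x y :=
  h.induction (fun _ _ hab ha hb hxa => hxa.trans
    (of_adj (hG hab) (fun h => ha (hS h)) fun h => hb (hS h))) (.refl fun hx => h.1 (hS hx))

theorem of_reachable (hx : x ∉ S) (h : G.Reachable x y)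
    (hadj : ∀ ⦃a b⦄, G.Adj a b → a ∉ S → G'.Adj a b ∧ b ∉ S) : ReachableAvoiding G' S x y :=
  reachable_induction (fun _ _ hab hxa =>
    have ⟨hab', hb⟩ := hadj hab hxa.2.1
    hxa.trans (of_adj hab' hxa.2.1 hb)) h (.refl hx)

theorem inter_nonempty {A : Set V} (hA : ReachableAvoiding G Aᶜ x y)
    (hS : ¬ReachableAvoiding G S x y) : (S ∩ A).Nonempty := by
  by_contra hSA
  have hsub : S ⊆ Aᶜ := fun a haS haA => hSA ⟨a, haS, haA⟩
  exact hS (hA.mono le_rfl hsub)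

end ReachableAvoiding

/-- The vertices of `R` survive in `G - S` and lie in pairwise different components. -/
structure SeparatedBy (G : SimpleGraph V) (S R : Set V) : Prop where
  disjoint : Disjoint R S
  pairwise : R.Pairwise fun x y => ¬ReachableAvoiding G S x y

theorem SeparatedBy.pair (hx : x ∉ S) (hy : y ∉ S) (h : ¬ReachableAvoiding G S x y) :
    SeparatedBy G S {x, y} where
  disjoint := by simp [hx, hy]
  pairwise := Set.pairwise_pair.2 fun _ => ⟨h, fun hyx => h hyx.symm⟩

theorem SeparatedBy.injOn_connectedComponentMk (hR : SeparatedBy G S R) :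
    Set.InjOn (induce Sᶜ G).connectedComponentMk (Subtype.val ⁻¹' R) := by
  intro a ha b hb hab
  by_contra hne
  exact hR.pairwise ha hb (Subtype.coe_ne_coe.2 hne) ⟨a.2, b.2, ConnectedComponent.exact hab⟩

theorem SeparatedBy.ncard_le_numComp [Finite V] (hR : SeparatedBy G S R) :
    R.ncard ≤ numComp G S := by
  have hsub : R ⊆ Set.range ((↑) : (Sᶜ : Set V) → V) := by
    rw [Subtype.range_coe]
    exact hR.disjoint.subset_compl_right
  rw [← Set.ncard_preimage_of_injective_subset_range Subtype.val_injective hsub,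
    ← hR.injOn_connectedComponentMk.ncard_image]
  exact Set.ncard_le_card _

theorem SeparatedBy.exists_ncard_eq_numComp (hR : SeparatedBy G S R) :
    ∃ R', R ⊆ R' ∧ SeparatedBy G S R' ∧ R'.ncard = numComp G S := by
  obtain ⟨U, hRU, -, himage, hinj⟩ :=
    hR.injOn_connectedComponentMk.exists_subset_injOn_subset_range_eq (Set.subset_univ _)
  refine ⟨Subtype.val '' U, fun a ha => ?_, ⟨?_, ?_⟩, ?_⟩
  · exact ⟨⟨a, hR.disjoint.subset_compl_right ha⟩, hRU ha, rfl⟩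
  · rw [Set.disjoint_left]
    rintro _ ⟨a, -, rfl⟩
    exact a.2
  · rintro _ ⟨a, ha, rfl⟩ _ ⟨b, hb, rfl⟩ hne ⟨_, _, hab⟩
    exact hne (congrArg _ (hinj ha hb (ConnectedComponent.sound hab)))
  · have hsurj : Function.Surjective (induce Sᶜ G).connectedComponentMk := Quot.mk_surjective
    rw [Set.ncard_image_of_injective _ Subtype.val_injective, ← hinj.ncard_image, himage,
      Set.image_univ, hsurj.range_eq, Set.ncard_univ, numComp]

theorem numComp_le_of_forall_reachableAvoiding [Finite V]
    (h : ∀ ⦃x y⦄, ReachableAvoiding G S x y → ReachableAvoiding G' S x y) :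
    numComp G' S ≤ numComp G S := by
  have hempty : SeparatedBy G' S ∅ := ⟨Set.empty_disjoint S, Set.pairwise_empty _⟩
  obtain ⟨R, -, hR, hcard⟩ := hempty.exists_ncard_eq_numComp
  rw [← hcard]
  exact SeparatedBy.ncard_le_numComp
    ⟨hR.disjoint, hR.pairwise.mono' fun _ _ hnot hxy => hnot (h hxy)⟩

theorem numComp_anti [Finite V] (h : G' ≤ G) : numComp G S ≤ numComp G' S :=
  numComp_le_of_forall_reachableAvoiding fun _ _ => .mono h subset_rfl

theorem numComp_deleteEdges_le {u v : V} [Finite V]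
    (huv : u ∉ S → v ∉ S → ReachableAvoiding (G.deleteEdges {s(u, v)}) S u v) :
    numComp (G.deleteEdges {s(u, v)}) S ≤ numComp G S := by
  refine numComp_le_of_forall_reachableAvoiding fun x y hxy =>
    hxy.induction (fun a b hab ha hb hxa => hxa.trans ?_) (.refl hxy.1)
  by_cases he : s(a, b) = s(u, v)
  · rcases Sym2.eq_iff.1 he with ⟨rfl, rfl⟩ | ⟨rfl, rfl⟩
    exacts [huv ha hb, (huv hb ha).symm]
  · exact .of_adj (deleteEdges_adj.2 ⟨hab, he⟩) ha hb

theorem isCutset_of_not_reachableAvoiding [Finite V] (hx : x ∉ S) (hy : y ∉ S)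
    (h : ¬ReachableAvoiding G S x y) : IsCutset G S := by
  have hne : x ≠ y := by
    rintro rfl
    exact h (.refl hx)
  have hcard := (SeparatedBy.pair hx hy h).ncard_le_numComp
  rwa [Set.ncard_pair hne] at hcard

theorem isCutVertex_of_forall_adj [Finite V] {A : Set V} {a b c : V}
    (h : ∀ ⦃x y⦄, G.Adj x y → x ∈ A → y ∉ A → x = a)
    (ha : a ∈ A) (hb : b ∈ A) (hba : b ≠ a) (hc : c ∉ A) : IsCutVertex G a := by
  have hca : c ≠ a := fun hca => hc (hca ▸ ha)
  refine isCutset_of_not_reachableAvoiding (x := b) (y := c) hba hca fun hbc => hc ?_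
  refine hbc.induction (p := (· ∈ A)) (fun x y hxy hx _ hxA => ?_) hb
  by_contra hyA
  exact hx (h hxy hxA hyA)

theorem not_isCutset_top : ¬IsCutset (⊤ : SimpleGraph V) S := by
  have : Subsingleton (induce Sᶜ (⊤ : SimpleGraph V)).ConnectedComponent := by
    rw [induce_top]
    exact Preconnected.subsingleton_connectedComponent preconnected_top
  exact Finite.card_le_one_iff_subsingleton.2 this |>.not_gt

end Components

section Toughness

variable {V : Type*} {G : SimpleGraph V} {S : Set V}

theorem toughness_nonneg (G : SimpleGraph V) : 0 ≤ toughness G := by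
  refine Real.sInf_nonneg ?_
  rintro _ ⟨S, -, rfl⟩
  positivity

theorem IsCutset.toughness_le (hS : IsCutset G S) :
    toughness G ≤ (S.ncard : ℝ) / numComp G S := by
  refine csInf_le ⟨0, ?_⟩ ⟨S, hS, rfl⟩
  rintro _ ⟨S', -, rfl⟩
  positivity

theorem IsCutset.numComp_pos (hS : IsCutset G S) : (0 : ℝ) < numComp G S :=
  Nat.cast_pos.2 (zero_lt_one.trans hS)

theorem IsCutset.toughness_mul_numComp_le (hS : IsCutset G S) :
    toughness G * numComp G S ≤ S.ncard :=
  (le_div_iff₀ hS.numComp_pos).1 hS.toughness_le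

theorem le_toughness {t : ℝ} (hG : ∃ S, IsCutset G S)
    (h : ∀ S, IsCutset G S → t * numComp G S ≤ S.ncard) : t ≤ toughness G := by
  obtain ⟨S₀, hS₀⟩ := hG
  refine le_csInf ⟨_, S₀, hS₀, rfl⟩ ?_
  rintro _ ⟨S, hS, rfl⟩
  exact (le_div_iff₀ hS.numComp_pos).2 (h S hS)

theorem IsCutset.toughness_le_ncard_div_two (hS : IsCutset G S) :
    toughness G ≤ S.ncard / 2 := by
  have htwo : (2 : ℝ) ≤ numComp G S := Nat.ofNat_le_cast.2 hS
  exact hS.toughness_le.trans (div_le_div_of_nonneg_left (by positivity) two_pos htwo)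

theorem IsCutVertex.toughness_le_half {x : V} (hx : IsCutVertex G x) : toughness G ≤ 1 / 2 := by
  simpa using IsCutset.toughness_le_ncard_div_two hx

-- A complete graph has no cutset, and the infimum of the empty set is `0`.
theorem toughness_top : toughness (⊤ : SimpleGraph V) = 0 := by
  simp [toughness, not_isCutset_top]

theorem toughness_mul_numComp_le_of_nonempty [Finite V] (hG : toughness G ≤ 1)
    (hS : S.Nonempty) : toughness G * numComp G S ≤ S.ncard := by
  by_cases hcut : IsCutset G S
  · exact hcut.toughness_mul_numComp_le
  · have hcomp : (numComp G S : ℝ) ≤ 1 := Nat.cast_le_one.2 (not_lt.1 hcut)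
    have hcard : (1 : ℝ) ≤ S.ncard := Nat.one_le_cast.2 hS.ncard_pos
    exact (mul_le_one₀ hG (Nat.cast_nonneg _) hcomp).trans hcard

end Toughness

/-- The sides `A` and `B` of a 2-separation of `G`: they overlap exactly in `u` and `v`, and no
edge of `G` joins their interiors. -/
structure IsTwoSeparation {V : Type*} (G : SimpleGraph V) (u v : V) (A B : Set V) : Prop where
  union_eq : A ∪ B = Set.univ
  inter_eq : A ∩ B = {u, v}
  not_adj : ∀ ⦃x⦄, x ∈ A \ B → ∀ ⦃y⦄, y ∈ B \ A → ¬G.Adj x y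

namespace IsTwoSeparation

variable {V : Type*} {G : SimpleGraph V} {A B S R : Set V} {u v w x y : V}

theorem symm (h : IsTwoSeparation G u v A B) : IsTwoSeparation G u v B A where
  union_eq := Set.union_comm B A ▸ h.union_eq
  inter_eq := Set.inter_comm B A ▸ h.inter_eq
  not_adj _ hx _ hy hxy := h.not_adj hy hx hxy.symm

theorem mem_or_mem (h : IsTwoSeparation G u v A B) (x : V) : x ∈ A ∨ x ∈ B :=
  h.union_eq.ge (Set.mem_univ x)

theorem mem_of_adj (h : IsTwoSeparation G u v A B) (hxy : G.Adj x y) (hx : x ∈ A) (hxu : x ≠ u)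
    (hxv : x ≠ v) : y ∈ A := by
  by_contra hy
  have hxB : x ∉ B := fun hxB => (h.inter_eq.subset ⟨hx, hxB⟩).elim hxu hxv
  exact h.not_adj ⟨hx, hxB⟩ ⟨(h.mem_or_mem y).resolve_left hy, hy⟩ hxy

/-- A path that starts in `A` and avoids `u` and `v` neither leaves `A` nor uses the edge `uv`. -/
theorem reachableAvoiding_deleteEdges (h : IsTwoSeparation G u v A B) (hxA : x ∈ A)
    (hxS : x ∉ S) (hxu : ¬ReachableAvoiding (G.deleteEdges {s(u, v)}) S x u)
    (hxv : ¬ReachableAvoiding (G.deleteEdges {s(u, v)}) S x v)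
    (hxy : ReachableAvoiding G (S ∩ A) x y) :
    ReachableAvoiding (G.deleteEdges {s(u, v)}) S x y := by
  refine (hxy.induction (p := fun a => a ∈ A ∧ ReachableAvoiding (G.deleteEdges {s(u, v)}) S x a)
    (fun a b hab _ hb ⟨haA, hxa⟩ => ?_) ⟨hxA, .refl hxS⟩).2
  have hau : a ≠ u := fun hau => hxu (hau ▸ hxa)
  have hav : a ≠ v := fun hav => hxv (hav ▸ hxa)
  have hbA : b ∈ A := h.mem_of_adj hab haA hau hav
  have hab' : (G.deleteEdges {s(u, v)}).Adj a b := by simp [hab, hau, hav]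
  exact ⟨hbA, hxa.trans (.of_adj hab' hxa.2.1 fun hbS => hb ⟨hbS, hbA⟩)⟩

theorem separatedBy_inter (h : IsTwoSeparation G u v A B)
    (hR : SeparatedBy (G.deleteEdges {s(u, v)}) S R) (hu : u ∈ R) (hv : v ∈ R)
    (hw : w = u ∨ w = v) : SeparatedBy G (S ∩ A) ((R ∩ A) \ {w}) where
  disjoint := hR.disjoint.mono (fun _ hx => hx.1.1) Set.inter_subset_left
  pairwise := by
    have hnot_reach : ∀ ⦃x⦄, x ∈ R ∩ A → ∀ ⦃y⦄, y ∈ R → x ≠ y → x ≠ u → x ≠ v →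
        ¬ReachableAvoiding G (S ∩ A) x y := fun x hx y hy hne hxu hxv hxy =>
      hR.pairwise hx.1 hy hne <| h.reachableAvoiding_deleteEdges hx.2
        (hR.disjoint.notMem_of_mem_left hx.1) (hR.pairwise hx.1 hu hxu)
        (hR.pairwise hx.1 hv hxv) hxy
    rintro x ⟨hx, hxw⟩ y ⟨hy, hyw⟩ hne hxy
    have hterminal : (x ≠ u ∧ x ≠ v) ∨ (y ≠ u ∧ y ≠ v) := by
      simp only [Set.mem_singleton_iff] at hxw hyw
      grind
    rcases hterminal with ⟨hxu, hxv⟩ | ⟨hyu, hyv⟩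
    · exact hnot_reach hx hy.1 hne hxu hxv hxy
    · exact hnot_reach hy hx.1 hne.symm hyu hyv hxy.symm

/-- Split a transversal of the components containing both `u` and `v` along the separation,
counting `u` on the side `A` and `v` on the side `B`. -/
theorem numComp_deleteEdges_le_add [Finite V] (h : IsTwoSeparation G u v A B)
    (hu : u ∉ S) (hv : v ∉ S) (huv : ¬ReachableAvoiding (G.deleteEdges {s(u, v)}) S u v) :
    numComp (G.deleteEdges {s(u, v)}) S ≤ numComp G (S ∩ A) + numComp G (S ∩ B) := by
  obtain ⟨R, huvR, hR, hcard⟩ := (SeparatedBy.pair hu hv huv).exists_ncard_eq_numComp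
  have huR : u ∈ R := huvR (Set.mem_insert u {v})
  have hvR : v ∈ R := huvR (Set.mem_insert_of_mem u rfl)
  have hne : u ≠ v := by
    rintro rfl
    exact huv (.refl hu)
  have huA : u ∈ A := (h.inter_eq.ge (Set.mem_insert u {v})).1
  have hvB : v ∈ B := (h.inter_eq.ge (Set.mem_insert_of_mem u rfl)).2
  have hcover : R ⊆ ((R ∩ A) \ {v}) ∪ ((R ∩ B) \ {u}) := by
    intro x hx
    by_cases hxv : x = v
    · subst hxv
      exact .inr ⟨⟨hx, hvB⟩, hne.symm⟩
    by_cases hxA : x ∈ A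
    · exact .inl ⟨⟨hx, hxA⟩, hxv⟩
    · have hxB : x ∈ B := (h.mem_or_mem x).resolve_left hxA
      exact .inr ⟨⟨hx, hxB⟩, fun hxu => hxA (hxu ▸ huA)⟩
  calc numComp (G.deleteEdges {s(u, v)}) S = R.ncard := hcard.symm
    _ ≤ (((R ∩ A) \ {v}) ∪ ((R ∩ B) \ {u})).ncard := Set.ncard_le_ncard hcover
    _ ≤ ((R ∩ A) \ {v}).ncard + ((R ∩ B) \ {u}).ncard := Set.ncard_union_le _ _
    _ ≤ numComp G (S ∩ A) + numComp G (S ∩ B) := add_le_add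
        (h.separatedBy_inter hR huR hvR (.inr rfl)).ncard_le_numComp
        (h.symm.separatedBy_inter hR huR hvR (.inl rfl)).ncard_le_numComp

theorem ncard_inter_add_ncard_inter_le [Finite V] (h : IsTwoSeparation G u v A B)
    (hu : u ∉ S) (hv : v ∉ S) : (S ∩ A).ncard + (S ∩ B).ncard ≤ S.ncard := by
  have hdisj : Disjoint (S ∩ A) (S ∩ B) := by
    refine Set.disjoint_left.2 fun x hxA hxB => ?_
    rcases h.inter_eq.subset ⟨hxA.2, hxB.2⟩ with rfl | rfl
    exacts [hu hxA.1, hv hxA.1]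
  rw [← Set.ncard_union_eq hdisj]
  exact Set.ncard_le_ncard (Set.union_subset Set.inter_subset_left Set.inter_subset_left)

theorem sdiff_nonempty (h : IsTwoSeparation G u v A B) (hne : u ≠ v)
    (hA : ReachableAvoiding (G.deleteEdges {s(u, v)}) Aᶜ u v) : (A \ B).Nonempty := by
  have hnot : ¬ReachableAvoiding (G.deleteEdges {s(u, v)}) {u, v}ᶜ u v := fun huv => by
    refine hne (huv.induction (p := (u = ·)) (fun a b hab _ hb ha => ?_) rfl)
    subst ha
    rcases not_not.1 hb with rfl | rfl
    exacts [rfl, ((deleteEdges_adj.1 hab).2 rfl).elim]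
  obtain ⟨x, hx, hxA⟩ := hA.inter_nonempty hnot
  exact ⟨x, hxA, fun hxB => hx (h.inter_eq.subset ⟨hxA, hxB⟩)⟩

theorem isCutset_pair [Finite V] (h : IsTwoSeparation G u v A B)
    (hA : (A \ B).Nonempty) (hB : (B \ A).Nonempty) : IsCutset G {u, v} := by
  obtain ⟨a, haA, haB⟩ := hA
  obtain ⟨b, -, hbA⟩ := hB
  rw [← h.inter_eq]
  refine isCutset_of_not_reachableAvoiding (fun ha => haB ha.2) (fun hb => hbA hb.1)
    fun hab => hbA (hab.induction (p := (· ∈ A)) (fun x y hxy hx _ hxA => ?_) haA)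
  rw [h.inter_eq] at hx
  exact h.mem_of_adj hxy hxA (fun hxu => hx (.inl hxu)) fun hxv => hx (.inr hxv)

theorem toughness_le_deleteEdges [Finite V] (h : IsTwoSeparation G u v A B) (hne : u ≠ v)
    (hA : ReachableAvoiding (G.deleteEdges {s(u, v)}) Aᶜ u v)
    (hB : ReachableAvoiding (G.deleteEdges {s(u, v)}) Bᶜ u v) :
    toughness G ≤ toughness (G.deleteEdges {s(u, v)}) := by
  have hcut : IsCutset G {u, v} := h.isCutset_pair (h.sdiff_nonempty hne hA)
    (h.symm.sdiff_nonempty hne hB)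
  have hle_one : toughness G ≤ 1 := by
    simpa [Set.ncard_pair hne] using hcut.toughness_le_ncard_div_two
  refine le_toughness ⟨_, hcut.trans_le (numComp_anti (deleteEdges_le _))⟩ fun S hS => ?_
  by_cases hsep : u ∉ S → v ∉ S → ReachableAvoiding (G.deleteEdges {s(u, v)}) S u v
  · have hle := numComp_deleteEdges_le hsep
    calc toughness G * numComp (G.deleteEdges {s(u, v)}) S
        ≤ toughness G * numComp G S :=
          mul_le_mul_of_nonneg_left (Nat.cast_le.2 hle) (toughness_nonneg G)
      _ ≤ S.ncard := IsCutset.toughness_mul_numComp_le (hS.trans_le hle)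
  · push Not at hsep
    obtain ⟨hu, hv, huv⟩ := hsep
    calc toughness G * numComp (G.deleteEdges {s(u, v)}) S
        ≤ toughness G * (numComp G (S ∩ A) + numComp G (S ∩ B)) :=
          mul_le_mul_of_nonneg_left (mod_cast h.numComp_deleteEdges_le_add hu hv huv)
            (toughness_nonneg G)
      _ = toughness G * numComp G (S ∩ A) + toughness G * numComp G (S ∩ B) := mul_add ..
      _ ≤ (S ∩ A).ncard + (S ∩ B).ncard := add_le_add
          (toughness_mul_numComp_le_of_nonempty hle_one (hA.inter_nonempty huv))
          (toughness_mul_numComp_le_of_nonempty hle_one (hB.inter_nonempty huv))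
      _ ≤ S.ncard := mod_cast h.ncard_inter_add_ncard_inter_le hu hv

end IsTwoSeparation

namespace SPTree

variable {V : Type*} {G : SimpleGraph V} {T P l r c : SPTree V} {u v x : V} {e : Sym2 V}

theorem finite_verts (T : SPTree V) : T.verts.Finite := by
  induction T with
  | edge u v => exact Set.toFinite {u, v}
  | series l r hl hr => exact hl.union hr
  | parallel l r hl hr => exact hl.union hr

theorem src_mem_verts (T : SPTree V) : T.src ∈ T.verts := by
  induction T with
  | edge u v => exact .inl rfl
  | series l r hl _ => exact .inl hl
  | parallel l r hl _ => exact .inl hl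

theorem tgt_mem_verts (T : SPTree V) : T.tgt ∈ T.verts := by
  induction T with
  | edge u v => exact .inr rfl
  | series l r _ hr => exact .inr hr
  | parallel l r hl _ => exact .inl hl

theorem mem_verts_of_mem_edges (he : e ∈ T.edges) (hx : x ∈ e) : x ∈ T.verts := by
  induction T with
  | edge u v =>
    obtain rfl : e = s(u, v) := he
    exact Sym2.mem_iff.1 hx
  | series l r hl hr => exact he.imp hl hr
  | parallel l r hl hr => exact he.imp hl hr

namespace WF

theorem eq_tgt_of_mem_series (h : (series l r).WF) (hl : x ∈ l.verts) (hr : x ∈ r.verts) :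
    x = l.tgt :=
  h.2.2.2.subset ⟨hl, hr⟩

theorem eq_src_or_tgt_of_mem_parallel (h : (parallel l r).WF) (hl : x ∈ l.verts)
    (hr : x ∈ r.verts) : x = l.src ∨ x = l.tgt :=
  h.2.2.2.2.1.subset ⟨hl, hr⟩

theorem parallel_comm (h : (parallel l r).WF) : (parallel r l).WF := by
  obtain ⟨hl, hr, hsrc, htgt, hinter, hdisj⟩ := h
  refine ⟨hr, hl, hsrc.symm, htgt.symm, ?_, hdisj.symm⟩
  rw [Set.inter_comm, hinter, hsrc, htgt]

theorem src_ne_tgt (h : T.WF) : T.src ≠ T.tgt := by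
  induction T with
  | edge u v => exact h
  | series l r hl _ =>
    intro hst
    have hsrc : l.src ∈ r.verts := by
      rw [show l.src = r.tgt from hst]
      exact r.tgt_mem_verts
    exact hl h.1 (h.eq_tgt_of_mem_series l.src_mem_verts hsrc)
  | parallel l r hl _ => exact hl h.1

theorem not_isDiag (h : T.WF) (he : e ∈ T.edges) : ¬e.IsDiag := by
  induction T with
  | edge u v =>
    obtain rfl : e = s(u, v) := he
    exact fun hdiag => h (Sym2.mk_isDiag_iff.1 hdiag)
  | series l r hl hr => exact he.elim (hl h.1) (hr h.2.1)
  | parallel l r hl hr => exact he.elim (hl h.1) (hr h.2.1)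

theorem disjoint_edges_of_series (h : (series l r).WF) : Disjoint l.edges r.edges := by
  refine Set.disjoint_left.2 fun e hel her => ?_
  have heq : ∀ x ∈ e, x = l.tgt := fun x hx =>
    h.eq_tgt_of_mem_series (mem_verts_of_mem_edges hel hx) (mem_verts_of_mem_edges her hx)
  induction e using Sym2.ind with
  | h x y =>
    refine h.1.not_isDiag hel (Sym2.mk_isDiag_iff.2 ?_)
    exact (heq x (Sym2.mem_mk_left x y)).trans (heq y (Sym2.mem_mk_right x y)).symm

theorem reachable (h : T.WF) (hG : T.edges ⊆ G.edgeSet) : G.Reachable T.src T.tgt := by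
  induction T with
  | edge u v => exact Adj.reachable (hG rfl)
  | series l r hl hr =>
    obtain ⟨hGl, hGr⟩ := Set.union_subset_iff.1 hG
    have hmid : l.tgt = r.src := h.2.2.1
    exact (hl h.1 hGl).trans (hmid ▸ hr h.2.1 hGr)
  | parallel l r hl _ => exact hl h.1 (Set.union_subset_iff.1 hG).1

theorem reachableAvoiding_compl_verts (h : T.WF) (hG : T.edges ⊆ G.edgeSet) :
    ReachableAvoiding G T.vertsᶜ T.src T.tgt := by
  have hreach : (fromEdgeSet T.edges).Reachable T.src T.tgt := by
    refine h.reachable fun e he => ?_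
    rw [edgeSet_fromEdgeSet]
    exact ⟨he, h.not_isDiag he⟩
  refine .of_reachable (not_not.2 T.src_mem_verts) hreach fun x y hxy _ => ?_
  have he : s(x, y) ∈ T.edges := ((fromEdgeSet_adj _).1 hxy).1
  exact ⟨hG he, not_not.2 (mem_verts_of_mem_edges he (Sym2.mem_mk_right x y))⟩

end WF

theorem parChildren_length_pos (T : SPTree V) : 0 < T.parChildren.length := by
  induction T with
  | edge _ _ => exact Nat.one_pos
  | series _ _ => exact Nat.one_pos
  | parallel l r hl _ =>
    rw [parChildren, List.length_append]
    exact Nat.add_pos_left hl _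

theorem one_lt_length_parChildren (hT : T.IsParallelNode) : 1 < T.parChildren.length := by
  cases T with
  | edge u v => exact hT.elim
  | series l r => exact hT.elim
  | parallel l r =>
    rw [parChildren, List.length_append]
    exact Nat.add_le_add l.parChildren_length_pos r.parChildren_length_pos

theorem not_isParallelNode_of_mem_parChildren (hc : c ∈ T.parChildren) : ¬c.IsParallelNode := by
  induction T with
  | edge _ _ => exact List.mem_singleton.1 hc ▸ not_false
  | series _ _ => exact List.mem_singleton.1 hc ▸ not_false
  | parallel l r hl hr => exact (List.mem_append.1 hc).elim hl hr

theorem mem_edges_iff_exists_parChildren :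
    e ∈ T.edges ↔ ∃ c ∈ T.parChildren, e ∈ c.edges := by
  induction T with
  | edge u v => simp [parChildren]
  | series l r => simp [parChildren]
  | parallel l r hl hr =>
    simp only [edges, parChildren, Set.mem_union, hl, hr, List.mem_append, or_and_right, exists_or]

theorem edges_subset_of_mem_parChildren (hc : c ∈ T.parChildren) : c.edges ⊆ T.edges :=
  fun _ he => mem_edges_iff_exists_parChildren.2 ⟨c, hc, he⟩

theorem hasEdgeChild_iff : T.HasEdgeChild ↔ ∃ u v, edge u v ∈ T.parChildren := by
  constructor
  · rintro ⟨c, hc, hleaf⟩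
    cases c with
    | edge u v => exact ⟨u, v, hc⟩
    | series l r => exact hleaf.elim
    | parallel l r => exact hleaf.elim
  · rintro ⟨u, v, hc⟩
    exact ⟨_, hc, trivial⟩

theorem pars_false_subset_pars_true (T : SPTree V) : pars false T ⊆ pars true T := by
  cases T with
  | edge u v => exact fun _ hP => hP
  | series l r => exact fun _ hP => hP
  | parallel l r =>
    intro P hP
    simp only [pars, List.mem_append] at hP ⊢
    exact hP.imp_left (·.imp_left (by simp))

theorem isParallelNode_of_mem_pars {b : Bool} (hP : P ∈ pars b T) : P.IsParallelNode := by
  induction T generalizing b with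
  | edge u v => simp [pars] at hP
  | series l r hl hr => exact (List.mem_append.1 hP).elim hl hr
  | parallel l r hl hr =>
    simp only [pars, List.mem_append] at hP
    rcases hP with (hP | hP) | hP
    · obtain ⟨-, rfl⟩ : b = true ∧ P = parallel l r := by simpa using hP
      trivial
    · exact hl hP
    · exact hr hP

namespace WF

theorem src_tgt_of_mem_parChildren (h : T.WF) (hc : c ∈ T.parChildren) :
    c.src = T.src ∧ c.tgt = T.tgt := by
  induction T with
  | edge u v => exact List.mem_singleton.1 hc ▸ ⟨rfl, rfl⟩
  | series l r => exact List.mem_singleton.1 hc ▸ ⟨rfl, rfl⟩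
  | parallel l r hl hr =>
    obtain ⟨hlwf, hrwf, hsrc, htgt, -⟩ := h
    rcases List.mem_append.1 hc with hc | hc
    · exact hl hlwf hc
    · exact (hr hrwf hc).imp (·.trans hsrc.symm) (·.trans htgt.symm)

theorem pairwise_disjoint_parChildren (h : T.WF) :
    T.parChildren.Pairwise fun c d => Disjoint c.edges d.edges := by
  induction T with
  | edge u v => exact List.pairwise_singleton _ _
  | series l r => exact List.pairwise_singleton _ _
  | parallel l r hl hr =>
    obtain ⟨hlwf, hrwf, -, -, -, hdisj⟩ := h
    refine List.pairwise_append.2 ⟨hl hlwf, hr hrwf, fun c hc d hd => ?_⟩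
    exact hdisj.mono (edges_subset_of_mem_parChildren hc) (edges_subset_of_mem_parChildren hd)

theorem edge_mem_parChildren (h : T.WF) (hT : T.HasEdgeChild) :
    edge T.src T.tgt ∈ T.parChildren := by
  obtain ⟨u, v, hc⟩ := hasEdgeChild_iff.1 hT
  obtain ⟨rfl, rfl⟩ : u = T.src ∧ v = T.tgt := h.src_tgt_of_mem_parChildren hc
  exact hc

theorem mk_mem_edges (h : T.WF) (hT : T.HasEdgeChild) : s(T.src, T.tgt) ∈ T.edges :=
  edges_subset_of_mem_parChildren (h.edge_mem_parChildren hT) rfl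

theorem exists_parChildren_perm_cons (h : T.WF) (hT : T.HasEdgeChild) :
    ∃ L, T.parChildren.Perm (edge T.src T.tgt :: L) ∧ (∀ c ∈ L, s(T.src, T.tgt) ∉ c.edges) ∧
      L.Pairwise fun c d => Disjoint c.edges d.edges := by
  obtain ⟨L₁, L₂, hL⟩ := List.append_of_mem (h.edge_mem_parChildren hT)
  have hperm : T.parChildren.Perm (edge T.src T.tgt :: (L₁ ++ L₂)) := hL ▸ List.perm_middle
  obtain ⟨hedge, hrest⟩ :=
    List.pairwise_cons.1 (hperm.pairwise h.pairwise_disjoint_parChildren fun h => h.symm)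
  exact ⟨L₁ ++ L₂, hperm, fun c hc => Set.disjoint_left.1 (hedge c hc) rfl, hrest⟩

end WF

/-- `P` is a part of `G` attached only at its terminals: every edge of `G` outside `P` meets `P`
in `P.src` or `P.tgt` if at all. The rest of `G` plays the role of the sp-tree around the node
`P`, so no path from the root has to be recorded. -/
structure IsPart (P : SPTree V) (G : SimpleGraph V) : Prop where
  wf : P.WF
  edges_subset : P.edges ⊆ G.edgeSet
  eq_src_or_tgt : ∀ ⦃x y⦄, G.Adj x y → s(x, y) ∉ P.edges → x ∈ P.verts → x = P.src ∨ x = P.tgt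

/-- A part of `G` whose terminals are also joined by a path outside it. -/
structure IsBypassedPart (P : SPTree V) (G : SimpleGraph V) : Prop extends P.IsPart G where
  bypass : (G.deleteEdges P.edges).Reachable P.src P.tgt

namespace IsPart

theorem series_left (h : (series l r).IsPart G) : l.IsPart G where
  wf := h.wf.1
  edges_subset := Set.subset_union_left.trans h.edges_subset
  eq_src_or_tgt x y hxy he hx := by
    by_cases her : s(x, y) ∈ r.edges
    · have hxr : x ∈ r.verts := mem_verts_of_mem_edges her (Sym2.mem_mk_left x y)
      exact .inr (h.wf.eq_tgt_of_mem_series hx hxr)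
    · refine (h.eq_src_or_tgt hxy (not_or.2 ⟨he, her⟩) (.inl hx)).imp_right ?_
      rintro rfl
      exact h.wf.eq_tgt_of_mem_series hx r.tgt_mem_verts

theorem series_right (h : (series l r).IsPart G) : r.IsPart G where
  wf := h.wf.2.1
  edges_subset := Set.subset_union_right.trans h.edges_subset
  eq_src_or_tgt x y hxy he hx := by
    have hmid : l.tgt = r.src := h.wf.2.2.1
    by_cases hel : s(x, y) ∈ l.edges
    · have hxl : x ∈ l.verts := mem_verts_of_mem_edges hel (Sym2.mem_mk_left x y)
      exact .inl ((h.wf.eq_tgt_of_mem_series hxl hx).trans hmid)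
    · refine (h.eq_src_or_tgt hxy (not_or.2 ⟨hel, he⟩) (.inr hx)).imp_left ?_
      rintro rfl
      exact (h.wf.eq_tgt_of_mem_series l.src_mem_verts hx).trans hmid

theorem parallel_comm (h : (parallel l r).IsPart G) : (parallel r l).IsPart G where
  wf := h.wf.parallel_comm
  edges_subset := (Set.union_comm r.edges l.edges).subset.trans h.edges_subset
  eq_src_or_tgt x y hxy he hx := by
    have hx' := h.eq_src_or_tgt hxy (fun he' => he he'.symm) hx.symm
    exact hx'.imp (·.trans h.wf.2.2.1) (·.trans h.wf.2.2.2.1)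

theorem reachable_deleteEdges (h : P.IsPart G) {s : Set (Sym2 V)} (hs : Disjoint P.edges s) :
    (G.deleteEdges s).Reachable P.src P.tgt :=
  h.wf.reachable (edgeSet_deleteEdges s ▸ Set.subset_sdiff.2 ⟨h.edges_subset, hs⟩)

theorem parallel_left (h : (parallel l r).IsPart G) : l.IsPart G where
  wf := h.wf.1
  edges_subset := Set.subset_union_left.trans h.edges_subset
  eq_src_or_tgt x y hxy he hx := by
    by_cases her : s(x, y) ∈ r.edges
    · have hxr : x ∈ r.verts := mem_verts_of_mem_edges her (Sym2.mem_mk_left x y)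
      exact h.wf.eq_src_or_tgt_of_mem_parallel hx hxr
    · exact h.eq_src_or_tgt hxy (not_or.2 ⟨he, her⟩) (.inl hx)

theorem isBypassedPart_left (h : (parallel l r).IsPart G) : l.IsBypassedPart G where
  toIsPart := h.parallel_left
  bypass := by
    obtain ⟨-, -, hsrc, htgt, -, hdisj⟩ := h.wf
    rw [hsrc, htgt]
    exact h.parallel_comm.parallel_left.reachable_deleteEdges hdisj.symm

theorem isBypassedPart_right (h : (parallel l r).IsPart G) : r.IsBypassedPart G :=
  h.parallel_comm.isBypassedPart_left

theorem of_mem_parChildren (h : T.IsPart G) (hc : c ∈ T.parChildren) : c.IsPart G := by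
  induction T with
  | edge u v => exact List.mem_singleton.1 hc ▸ h
  | series l r => exact List.mem_singleton.1 hc ▸ h
  | parallel l r hl hr =>
    exact (List.mem_append.1 hc).elim (hl h.isBypassedPart_left.toIsPart)
      (hr h.isBypassedPart_right.toIsPart)

end IsPart

namespace IsBypassedPart

theorem series_left (h : (series l r).IsBypassedPart G) : l.IsBypassedPart G where
  toIsPart := h.toIsPart.series_left
  bypass := by
    have houter := h.bypass.mono (deleteEdges_anti (Set.subset_union_left : l.edges ⊆ _))
    have hr := h.toIsPart.series_right.reachable_deleteEdges h.wf.disjoint_edges_of_series.symm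
    rw [← show l.tgt = r.src from h.wf.2.2.1] at hr
    exact houter.trans hr.symm

theorem series_right (h : (series l r).IsBypassedPart G) : r.IsBypassedPart G where
  toIsPart := h.toIsPart.series_right
  bypass := by
    have houter := h.bypass.mono (deleteEdges_anti (Set.subset_union_right : r.edges ⊆ _))
    have hl := h.toIsPart.series_left.reachable_deleteEdges h.wf.disjoint_edges_of_series
    rw [show l.tgt = r.src from h.wf.2.2.1] at hl
    exact hl.symm.trans houter

theorem of_mem_pars {b : Bool} (h : T.IsBypassedPart G) (hP : P ∈ pars b T) :
    P.IsBypassedPart G := by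
  induction T generalizing b with
  | edge u v => simp [pars] at hP
  | series l r hl hr =>
    exact (List.mem_append.1 hP).elim (hl h.series_left) (hr h.series_right)
  | parallel l r hl hr =>
    simp only [pars, List.mem_append] at hP
    rcases hP with (hP | hP) | hP
    · obtain ⟨-, rfl⟩ : b = true ∧ P = parallel l r := by simpa using hP
      exact h
    · exact hl h.toIsPart.isBypassedPart_left hP
    · exact hr h.toIsPart.isBypassedPart_right hP

end IsBypassedPart

theorem IsPart.isBypassedPart_of_mem_pars_false (h : (parallel l r).IsPart G)
    (hP : P ∈ pars false (parallel l r)) : P.IsBypassedPart G := by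
  simp only [pars, Bool.false_eq_true, if_false, List.nil_append, List.mem_append] at hP
  exact hP.elim h.isBypassedPart_left.of_mem_pars h.isBypassedPart_right.of_mem_pars

theorem IsPart.isTwoSeparation (h : P.IsPart G) :
    IsTwoSeparation G P.src P.tgt P.verts (P.vertsᶜ ∪ {P.src, P.tgt}) where
  union_eq := by rw [← Set.union_assoc, Set.union_compl_self, Set.univ_union]
  inter_eq := by
    rw [Set.inter_union_distrib_left, Set.inter_compl_self, Set.empty_union,
      Set.inter_eq_right]
    exact Set.pair_subset P.src_mem_verts P.tgt_mem_verts
  not_adj x hx y hy hxy := by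
    have he : s(x, y) ∉ P.edges := fun he =>
      hy.2 (mem_verts_of_mem_edges he (Sym2.mem_mk_right x y))
    exact hx.2 (.inr (h.eq_src_or_tgt hxy he hx.1))

theorem IsPart.reachableAvoiding_interior (h : P.IsPart G) {s : Set (Sym2 V)}
    (hreach : (G.deleteEdges (s ∪ P.edges)).Reachable P.src P.tgt) :
    ReachableAvoiding (G.deleteEdges s) (P.vertsᶜ ∪ {P.src, P.tgt})ᶜ P.src P.tgt := by
  refine .of_reachable (fun hsrc => hsrc (.inr (.inl rfl))) hreach fun x y hxy _ => ?_
  obtain ⟨hxy, he⟩ := deleteEdges_adj.1 hxy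
  obtain ⟨hes, heP⟩ := not_or.1 he
  refine ⟨deleteEdges_adj.2 ⟨hxy, hes⟩, not_not.2 ?_⟩
  by_cases hy : y ∈ P.verts
  · exact .inr (h.eq_src_or_tgt hxy.symm (Sym2.eq_swap ▸ heP) hy)
  · exact .inl hy

/-- Here `P` is a sibling of the jump-edge joining its terminals. -/
theorem IsPart.toughness_le_deleteEdges [Finite V] (h : P.IsPart G)
    (he : s(P.src, P.tgt) ∉ P.edges)
    (hreach : (G.deleteEdges ({s(P.src, P.tgt)} ∪ P.edges)).Reachable P.src P.tgt) :
    toughness G ≤ toughness (G.deleteEdges {s(P.src, P.tgt)}) := by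
  refine h.isTwoSeparation.toughness_le_deleteEdges h.wf.src_ne_tgt
    (h.wf.reachableAvoiding_compl_verts ?_) (h.reachableAvoiding_interior hreach)
  rw [edgeSet_deleteEdges]
  exact Set.subset_sdiff.2 ⟨h.edges_subset, Set.disjoint_singleton_right.2 he⟩

theorem IsBypassedPart.toughness_le_deleteEdges_of_hasEdgeChild [Finite V]
    (h : P.IsBypassedPart G) (hP : P.IsParallelNode) (hchild : P.HasEdgeChild) :
    toughness G ≤ toughness (G.deleteEdges {s(P.src, P.tgt)}) := by
  obtain ⟨L, hperm, hedge, -⟩ := h.wf.exists_parChildren_perm_cons hchild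
  have hlen := one_lt_length_parChildren hP
  rw [hperm.length_eq] at hlen
  obtain ⟨c, hcL⟩ := List.exists_mem_of_length_pos (Nat.lt_of_succ_lt_succ hlen)
  have hc : c ∈ P.parChildren := hperm.mem_iff.2 (List.mem_cons_of_mem _ hcL)
  obtain ⟨hsrc, htgt⟩ := h.wf.src_tgt_of_mem_parChildren hc
  have hsub : {s(P.src, P.tgt)} ∪ c.edges ⊆ P.edges :=
    Set.union_subset (Set.singleton_subset_iff.2 (h.wf.mk_mem_edges hchild))
      (edges_subset_of_mem_parChildren hc)
  rw [← hsrc, ← htgt] at hedge hsub ⊢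
  refine (h.toIsPart.of_mem_parChildren hc).toughness_le_deleteEdges (hedge c hcL) ?_
  rw [hsrc, htgt] at hsub ⊢
  exact h.bypass.mono (deleteEdges_anti hsub)

theorem IsPart.toughness_le_deleteEdges_of_hasEdgeChild [Finite V] (h : P.IsPart G)
    (hchild : P.HasEdgeChild) (hlen : 3 ≤ P.parChildren.length) :
    toughness G ≤ toughness (G.deleteEdges {s(P.src, P.tgt)}) := by
  obtain ⟨L, hperm, hedge, hdisj⟩ := h.wf.exists_parChildren_perm_cons hchild
  rw [hperm.length_eq] at hlen
  match L, hlen with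
  | c :: d :: L, _ =>
    have hmem : ∀ a ∈ c :: d :: L, a ∈ P.parChildren := fun a ha =>
      hperm.mem_iff.2 (List.mem_cons_of_mem _ ha)
    have hc := hmem c (by simp)
    have hd := hmem d (by simp)
    obtain ⟨hcsrc, hctgt⟩ := h.wf.src_tgt_of_mem_parChildren hc
    obtain ⟨hdsrc, hdtgt⟩ := h.wf.src_tgt_of_mem_parChildren hd
    have hdc : Disjoint d.edges ({s(P.src, P.tgt)} ∪ c.edges) :=
      Set.disjoint_union_right.2 ⟨Set.disjoint_singleton_right.2 (hedge d (by simp)),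
        ((List.pairwise_cons.1 hdisj).1 d (by simp)).symm⟩
    have hroute := (h.of_mem_parChildren hd).reachable_deleteEdges hdc
    rw [hdsrc, hdtgt, ← hcsrc, ← hctgt] at hroute
    rw [← hcsrc, ← hctgt]
    exact (h.of_mem_parChildren hc).toughness_le_deleteEdges
      (hcsrc ▸ hctgt ▸ hedge c (by simp)) hroute

theorem WF.isCutVertex_of_series [Finite V] (h : (series l r).WF)
    (hG : G.edgeSet ⊆ (series l r).edges) : IsCutVertex G l.tgt := by
  have hne : r.src ≠ r.tgt := h.2.1.src_ne_tgt
  rw [← show l.tgt = r.src from h.2.2.1] at hne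
  refine isCutVertex_of_forall_adj (A := l.verts) (fun x y hxy hx hy => ?_) l.tgt_mem_verts
    l.src_mem_verts h.1.src_ne_tgt
    fun hr => hne (h.eq_tgt_of_mem_series hr r.tgt_mem_verts).symm
  rcases hG (G.mem_edgeSet.2 hxy) with he | he
  · exact (hy (mem_verts_of_mem_edges he (Sym2.mem_mk_right x y))).elim
  · exact h.eq_tgt_of_mem_series hx (mem_verts_of_mem_edges he (Sym2.mem_mk_left x y))

theorem IsPart.isCutVertex_of_series_edge_left [Finite V] (h : (series (edge u v) r).IsPart G) :
    IsCutVertex (G.deleteEdges {s(u, v)}) r.tgt := by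
  have hu : u ∉ r.verts := fun hu => h.wf.1 (h.wf.eq_tgt_of_mem_series (.inl rfl) hu)
  refine isCutVertex_of_forall_adj (fun x y hxy hx hy => ?_) r.tgt_mem_verts r.src_mem_verts
    h.wf.2.1.src_ne_tgt hu
  obtain ⟨hxy, he⟩ := deleteEdges_adj.1 hxy
  have her : s(x, y) ∉ r.edges := fun her =>
    hy (mem_verts_of_mem_edges her (Sym2.mem_mk_right x y))
  refine (h.eq_src_or_tgt hxy (not_or.2 ⟨he, her⟩) (.inr hx)).resolve_left ?_
  rintro rfl
  exact hu hx

theorem IsPart.isCutVertex_of_series_edge_right [Finite V] (h : (series l (edge u v)).IsPart G) :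
    IsCutVertex (G.deleteEdges {s(u, v)}) l.src := by
  have hmid : l.tgt = u := h.wf.2.2.1
  have hv : v ∉ l.verts := fun hv =>
    h.wf.2.1 ((h.wf.eq_tgt_of_mem_series hv (.inr rfl)).trans hmid).symm
  refine isCutVertex_of_forall_adj (fun x y hxy hx hy => ?_) l.src_mem_verts l.tgt_mem_verts
    h.wf.1.src_ne_tgt.symm hv
  obtain ⟨hxy, he⟩ := deleteEdges_adj.1 hxy
  have hel : s(x, y) ∉ l.edges := fun hel =>
    hy (mem_verts_of_mem_edges hel (Sym2.mem_mk_right x y))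
  refine (h.eq_src_or_tgt hxy (not_or.2 ⟨hel, he⟩) (.inl hx)).resolve_right ?_
  rintro rfl
  exact hv hx

/-- The edge `e` is an edge child of the root cluster of `T`, or all of `T`. -/
def IsTopEdge (T : SPTree V) (e : Sym2 V) : Prop :=
  ∃ u v, edge u v ∈ T.parChildren ∧ e = s(u, v)

theorem IsTopEdge.exists_eq_edge (h : T.IsTopEdge e)
    (hT : ∀ P ∈ pars true T, ¬P.HasEdgeChild) : ∃ u v, T = edge u v ∧ e = s(u, v) := by
  obtain ⟨u, v, hc, rfl⟩ := h
  cases T with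
  | edge u' v' => exact ⟨u, v, (List.mem_singleton.1 hc).symm, rfl⟩
  | series l r => cases List.mem_singleton.1 hc
  | parallel l r =>
    exact (hT _ (by simp [pars]) (hasEdgeChild_iff.2 ⟨u, v, hc⟩)).elim

theorem IsPart.isTopEdge_or_exists_isCutVertex [Finite V] (h : T.IsPart G)
    (hT : ∀ P ∈ pars false T, ¬P.HasEdgeChild) (he : e ∈ T.edges) :
    T.IsTopEdge e ∨ ∃ x, IsCutVertex (G.deleteEdges {e}) x := by
  induction T with
  | edge u v => exact .inl ⟨u, v, List.mem_singleton_self _, he⟩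
  | series l r hl hr =>
    right
    obtain ⟨hTl, hTr⟩ := List.forall_mem_append.1 hT
    rcases he with he | he
    · refine (hl h.series_left (fun P hP => hTl P (pars_false_subset_pars_true l hP)) he).elim
        (fun htop => ?_) id
      obtain ⟨u, v, rfl, rfl⟩ := htop.exists_eq_edge hTl
      exact ⟨_, h.isCutVertex_of_series_edge_left⟩
    · refine (hr h.series_right (fun P hP => hTr P (pars_false_subset_pars_true r hP)) he).elim
        (fun htop => ?_) id
      obtain ⟨u, v, rfl, rfl⟩ := htop.exists_eq_edge hTr
      exact ⟨_, h.isCutVertex_of_series_edge_right⟩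
  | parallel l r hl hr =>
    obtain ⟨hTl, hTr⟩ := List.forall_mem_append.1 hT
    rcases he with he | he
    · exact (hl h.isBypassedPart_left.toIsPart hTl he).imp_left fun ⟨u, v, hc, huv⟩ =>
        ⟨u, v, List.mem_append_left _ hc, huv⟩
    · exact (hr h.isBypassedPart_right.toIsPart hTr he).imp_left fun ⟨u, v, hc, huv⟩ =>
        ⟨u, v, List.mem_append_right _ hc, huv⟩

/-- Deleting a leap-edge leaves its sibling, a series node, and cuts at the vertex where that node
was joined. -/
theorem IsPart.exists_isCutVertex_of_isTopEdge [Finite V] (h : T.IsPart G)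
    (hG : G.edgeSet ⊆ T.edges) (hlen : T.parChildren.length = 2) (he : T.IsTopEdge e) :
    ∃ x, IsCutVertex (G.deleteEdges {e}) x := by
  obtain ⟨u, v, hc, rfl⟩ := he
  obtain ⟨rfl, rfl⟩ : u = T.src ∧ v = T.tgt := h.wf.src_tgt_of_mem_parChildren hc
  obtain ⟨L, hperm, hedge, -⟩ := h.wf.exists_parChildren_perm_cons (hasEdgeChild_iff.2 ⟨_, _, hc⟩)
  obtain ⟨d, rfl⟩ : ∃ d, L = [d] := List.length_eq_one_iff.1 <| Nat.succ_injective <|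
    hperm.length_eq.symm.trans hlen
  have hd : d ∈ T.parChildren := hperm.mem_iff.2 (by simp)
  have hGd : (G.deleteEdges {s(T.src, T.tgt)}).edgeSet ⊆ d.edges := by
    rw [edgeSet_deleteEdges]
    rintro f ⟨hfG, hf⟩
    obtain ⟨c, hcT, hfc⟩ := mem_edges_iff_exists_parChildren.1 (hG hfG)
    rcases List.mem_pair.1 (hperm.mem_iff.1 hcT) with rfl | rfl
    exacts [(hf hfc).elim, hfc]
  cases d with
  | edge u' v' =>
    obtain ⟨hsrc, htgt⟩ := h.wf.src_tgt_of_mem_parChildren hd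
    refine (hedge _ (List.mem_singleton_self _) ?_).elim
    rw [← hsrc, ← htgt]
    rfl
  | series l r => exact ⟨_, (h.of_mem_parChildren hd).wf.isCutVertex_of_series hGd⟩
  | parallel l r => exact (not_isParallelNode_of_mem_parChildren hd trivial).elim

end SPTree

namespace RepresentsSP

variable {V : Type*} {G : SimpleGraph V} {T : SPTree V} {e : Sym2 V}

theorem finite (h : RepresentsSP G T) : Finite V :=
  Set.finite_univ_iff.1 (h.2.1 ▸ T.finite_verts)

theorem edgeSet_eq (h : RepresentsSP G T) : G.edgeSet = T.edges := by
  rw [h.2.2, edgeSet_fromEdgeSet]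
  exact (Set.disjoint_left.2 fun _ => h.1.not_isDiag).sdiff_eq_left

theorem isPart (h : RepresentsSP G T) : T.IsPart G where
  wf := h.1
  edges_subset := h.edgeSet_eq.ge
  eq_src_or_tgt _ _ hxy he := (he (h.edgeSet_eq.subset (G.mem_edgeSet.2 hxy))).elim

theorem exists_toughness_le_deleteEdges (h : RepresentsSP G T)
    (hG : 1 / 2 < toughness G) (hjump : T.HasJumpEdge) :
    ∃ e ∈ G.edgeSet, toughness G ≤ toughness (G.deleteEdges {e}) := by
  have := h.finite
  have hedge : ∀ {P : SPTree V}, P.IsPart G → P.HasEdgeChild → s(P.src, P.tgt) ∈ G.edgeSet :=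
    fun hP hchild => hP.edges_subset (hP.wf.mk_mem_edges hchild)
  rcases hjump with ⟨P, hP, hchild⟩ | ⟨-, hchild, hlen⟩
  · have hbypass : P.IsBypassedPart G := by
      cases T with
      | edge u v => simp [SPTree.pars] at hP
      | series l r =>
        exact ((h.1.isCutVertex_of_series h.edgeSet_eq.subset).toughness_le_half.not_gt hG).elim
      | parallel l r => exact h.isPart.isBypassedPart_of_mem_pars_false hP
    exact ⟨_, hedge hbypass.toIsPart hchild, hbypass.toughness_le_deleteEdges_of_hasEdgeChild
      (SPTree.isParallelNode_of_mem_pars hP) hchild⟩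
  · exact ⟨_, hedge h.isPart hchild,
      h.isPart.toughness_le_deleteEdges_of_hasEdgeChild hchild hlen⟩

theorem eq_top_of_edge {u v : V} (h : RepresentsSP G (.edge u v)) : G = ⊤ := by
  have hverts : ∀ x, x = u ∨ x = v := fun x => h.2.1.ge (Set.mem_univ x)
  ext x y
  rw [top_adj, h.2.2, fromEdgeSet_adj, and_iff_right_iff_imp]
  intro hne
  rcases hverts x with rfl | rfl <;> rcases hverts y with rfl | rfl
  exacts [(hne rfl).elim, rfl, Sym2.eq_swap, (hne rfl).elim]

theorem exists_isCutVertex_deleteEdges (h : RepresentsSP G T) (hG : 0 < toughness G)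
    (hjump : ¬T.HasJumpEdge) (he : e ∈ G.edgeSet) :
    ∃ x, IsCutVertex (G.deleteEdges {e}) x := by
  have := h.finite
  obtain ⟨hpars, hroot⟩ := not_or.1 hjump
  refine (h.isPart.isTopEdge_or_exists_isCutVertex (fun P hP hchild => hpars ⟨P, hP, hchild⟩)
    (h.edgeSet_eq.subset he)).elim (fun htop => ?_) id
  cases T with
  | edge u v =>
    rw [h.eq_top_of_edge, toughness_top] at hG
    exact (lt_irrefl 0 hG).elim
  | series l r =>
    obtain ⟨u, v, hc, -⟩ := htop
    cases List.mem_singleton.1 hc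
  | parallel l r =>
    refine h.isPart.exists_isCutVertex_of_isTopEdge h.edgeSet_eq.subset ?_ htop
    obtain ⟨u, v, hc, -⟩ := htop
    refine le_antisymm ?_ (SPTree.one_lt_length_parChildren trivial)
    by_contra! hlen
    exact hroot ⟨trivial, SPTree.hasEdgeChild_iff.2 ⟨u, v, hc⟩, hlen⟩

end RepresentsSP

theorem minTough_iff_no_jumpEdge_general {V : Type*} {G : SimpleGraph V} {T : SPTree V}
    (hrep : RepresentsSP G T) {t : ℝ} (ht : 1 / 2 < t) :
    MinTough G t ↔ toughness G = t ∧ ¬T.HasJumpEdge := by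
  constructor
  · rintro ⟨rfl, hmin⟩
    refine ⟨rfl, fun hjump => ?_⟩
    obtain ⟨e, he, hle⟩ := hrep.exists_toughness_le_deleteEdges ht hjump
    exact (hmin e he).not_ge hle
  · rintro ⟨rfl, hjump⟩
    refine ⟨rfl, fun e he => ?_⟩
    obtain ⟨x, hx⟩ := hrep.exists_isCutVertex_deleteEdges (one_half_pos.trans ht) hjump he
    exact hx.toughness_le_half.trans_lt ht

/-- A series-parallel graph `G` is minimally `t`-tough for `1/2 < t < 1` if and only if
`G` has toughness `t` and its sp-tree contains no jump-edges. -/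
theorem minTough_iff_no_jumpEdge {V : Type*} [Fintype V]
    (G : SimpleGraph V) (T : SPTree V) (hrep : RepresentsSP G T)
    (t : ℝ) (h1 : 1 / 2 < t) (h2 : t < 1) :
    MinTough G t ↔ (toughness G = t ∧ ¬ T.HasJumpEdge) :=
  minTough_iff_no_jumpEdge_general hrep h1
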